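/- arXiv:2302.07400 — 3 statements merged into one kernel-verified Lean document; each statement's English description precedes it below -/
import Mathlib

section
/- Let H be a real separable Hilbert space, ν = N(0,C) a centered Gaussian measure with C self-adjoint, positive, trace-class, and μ a probability measure on H with μ(C^{1/2}(H)) = 1. Then the convolution ν * μ is equivalent (mutually absolutely continuous) to ν. -/
open MeasureTheory ProbabilityTheory
open scoped ENNReal InnerProductSpace MeasureTheory

/-- `ν` is a centered Gaussian measure on the Hilbert space `H` with covariance operator `C`:
every one-dimensional projection is a centered real Gaussian with the corresponding variance. -/
def IsCenteredGaussian {H : Type*} [NormedAddCommGroup H] [InnerProductSpace ℝ H]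
    [MeasurableSpace H] (ν : Measure H) (C : H →L[ℝ] H) : Prop :=
  IsProbabilityMeasure ν ∧
    ∀ v : H, ν.map (fun x => ⟪v, x⟫_ℝ) = gaussianReal 0 (⟪C v, v⟫_ℝ).toNNReal

/-- A bounded operator on a Hilbert space is trace-class if the sum of its diagonal elements
converges in any Hilbert basis. -/
def IsTraceClass {H : Type*} [NormedAddCommGroup H] [InnerProductSpace ℝ H]
    (C : H →L[ℝ] H) : Prop :=
  ∀ b : HilbertBasis ℕ ℝ H, Summable fun i => ⟪C (b i), b i⟫_ℝ

section CameronMartin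

variable {H : Type*} [NormedAddCommGroup H] [InnerProductSpace ℝ H]
  [MeasurableSpace H] [BorelSpace H]

lemma cm_integrable (S : H →L[ℝ] H) (ν : Measure H)
    (hG : ∀ v : H, ν.map (fun x => ⟪v, x⟫_ℝ) = gaussianReal 0 (‖S v‖ ^ 2).toNNReal) (v : H) :
    Integrable (fun x => Real.exp ⟪v, x⟫_ℝ) ν := by
  have h := integrable_exp_mul_gaussianReal (μ := 0) (v := (‖S v‖ ^ 2).toNNReal) 1
  rw [← hG v, integrable_map_measure (by fun_prop) (by fun_prop)] at h
  simpa [Function.comp_def] using h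

lemma cm_integral (S : H →L[ℝ] H) (ν : Measure H)
    (hG : ∀ v : H, ν.map (fun x => ⟪v, x⟫_ℝ) = gaussianReal 0 (‖S v‖ ^ 2).toNNReal) (v : H) :
    ∫ x, Real.exp ⟪v, x⟫_ℝ ∂ν = Real.exp (‖S v‖ ^ 2 / 2) := by
  have h := mgf_gaussianReal (hG v) 1
  simpa [mgf] using h

lemma cm_memLp (S : H →L[ℝ] H) (ν : Measure H)
    (hG : ∀ v : H, ν.map (fun x => ⟪v, x⟫_ℝ) = gaussianReal 0 (‖S v‖ ^ 2).toNNReal) (v : H) :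
    MemLp (fun x => Real.exp ⟪v, x⟫_ℝ) 2 ν := by
  have hm := (cm_integrable S ν hG v).aestronglyMeasurable
  rw [memLp_two_iff_integrable_sq hm]
  refine (cm_integrable S ν hG ((2:ℝ) • v)).congr (ae_of_all _ fun x => ?_)
  simp only [inner_smul_left, conj_trivial]
  rw [← Real.exp_nat_mul]; norm_num

lemma cm_inner (S : H →L[ℝ] H) (ν : Measure H)
    (hG : ∀ v : H, ν.map (fun x => ⟪v, x⟫_ℝ) = gaussianReal 0 (‖S v‖ ^ 2).toNNReal) (u v : H) :
    ⟪(cm_memLp S ν hG u).toLp _, (cm_memLp S ν hG v).toLp _⟫_ℝ =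
      Real.exp (‖S (u + v)‖ ^ 2 / 2) := by
  rw [L2.inner_def, ← cm_integral S ν hG]
  refine integral_congr_ae ?_
  filter_upwards [(cm_memLp S ν hG u).coeFn_toLp, (cm_memLp S ν hG v).coeFn_toLp] with x h1 h2
  rw [h1, h2]
  simp [inner_add_left, Real.exp_add, mul_comm]

/-- The Cameron–Martin density for the direction `C v`. -/
noncomputable def cmDens (S : H →L[ℝ] H) (ν : Measure H)
    (hG : ∀ v : H, ν.map (fun x => ⟪v, x⟫_ℝ) = gaussianReal 0 (‖S v‖ ^ 2).toNNReal) (v : H) :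
    Lp ℝ 2 ν := Real.exp (-(‖S v‖ ^ 2 / 2)) • (cm_memLp S ν hG v).toLp _

lemma cmDens_inner (S : H →L[ℝ] H) (ν : Measure H)
    (hG : ∀ v : H, ν.map (fun x => ⟪v, x⟫_ℝ) = gaussianReal 0 (‖S v‖ ^ 2).toNNReal) (u v : H) :
    ⟪cmDens S ν hG u, cmDens S ν hG v⟫_ℝ = Real.exp ⟪S u, S v⟫_ℝ := by
  rw [cmDens, cmDens, inner_smul_left, inner_smul_right, cm_inner S ν hG, map_add, norm_add_sq_real]
  simp only [conj_trivial]
  rw [← Real.exp_add, ← Real.exp_add]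
  congr 1; ring

lemma cmDens_inner' (S : H →L[ℝ] H) (ν : Measure H)
    (hG : ∀ v : H, ν.map (fun x => ⟪v, x⟫_ℝ) = gaussianReal 0 (‖S v‖ ^ 2).toNNReal) (u v : H) :
    ⟪(cm_memLp S ν hG u).toLp _, cmDens S ν hG v⟫_ℝ =
      Real.exp (‖S u‖ ^ 2 / 2 + ⟪S u, S v⟫_ℝ) := by
  rw [cmDens, inner_smul_right, cm_inner S ν hG, map_add, norm_add_sq_real, ← Real.exp_add]
  congr 1; ring

lemma cmDens_nonneg (S : H →L[ℝ] H) (ν : Measure H)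
    (hG : ∀ v : H, ν.map (fun x => ⟪v, x⟫_ℝ) = gaussianReal 0 (‖S v‖ ^ 2).toNNReal) (v : H) :
    0 ≤ cmDens S ν hG v := by
  rw [← Lp.coeFn_nonneg]
  filter_upwards [(cm_memLp S ν hG v).coeFn_toLp,
    Lp.coeFn_smul (Real.exp (-(‖S v‖ ^ 2 / 2))) ((cm_memLp S ν hG v).toLp _)] with x h1 h2
  rw [cmDens, h2, Pi.smul_apply, h1]
  simp only [Pi.zero_apply, smul_eq_mul]
  positivity

lemma cmDens_dist (S : H →L[ℝ] H) (ν : Measure H)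
    (hG : ∀ v : H, ν.map (fun x => ⟪v, x⟫_ℝ) = gaussianReal 0 (‖S v‖ ^ 2).toNNReal) (u v : H) :
    ‖cmDens S ν hG u - cmDens S ν hG v‖ ^ 2 =
      Real.exp ⟪S u, S u⟫_ℝ - 2 * Real.exp ⟪S u, S v⟫_ℝ + Real.exp ⟪S v, S v⟫_ℝ := by
  rw [norm_sub_sq_real, ← real_inner_self_eq_norm_sq, ← real_inner_self_eq_norm_sq,
    cmDens_inner, cmDens_inner, cmDens_inner]

open Filter Topology in
lemma cm_exists_density (S : H →L[ℝ] H) (ν : Measure H)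
    (hG : ∀ v : H, ν.map (fun x => ⟪v, x⟫_ℝ) = gaussianReal 0 (‖S v‖ ^ 2).toNNReal)
    (w : H) (hw : w ∈ closure (Set.range S)) :
    ∃ F : Lp ℝ 2 ν, 0 ≤ F ∧ ∀ t : H, ⟪(cm_memLp S ν hG t).toLp _, F⟫_ℝ =
      Real.exp (‖S t‖ ^ 2 / 2 + ⟪S t, w⟫_ℝ) := by
  obtain ⟨y, hy, hlim⟩ := mem_closure_iff_seq_limit.1 hw
  choose v hv using hy
  have hlim' : Tendsto (fun n => S (v n)) atTop (𝓝 w) := by simpa [hv] using hlim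
  have hc : CauchySeq (fun n => cmDens S ν hG (v n)) := by
    rw [cauchySeq_iff_tendsto_dist_atTop_0]
    have h1 : Tendsto (fun p : ℕ × ℕ => S (v p.1)) atTop (𝓝 w) := by
      rw [← prod_atTop_atTop_eq]; exact hlim'.comp tendsto_fst
    have h2 : Tendsto (fun p : ℕ × ℕ => S (v p.2)) atTop (𝓝 w) := by
      rw [← prod_atTop_atTop_eq]; exact hlim'.comp tendsto_snd
    have h3 : Tendsto (fun p : ℕ × ℕ => ‖cmDens S ν hG (v p.1) - cmDens S ν hG (v p.2)‖ ^ 2)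
        atTop (𝓝 0) := by
      simp_rw [cmDens_dist]
      have := (((Real.continuous_exp.tendsto _).comp (h1.inner (𝕜 := ℝ) h1)).sub
        (((Real.continuous_exp.tendsto _).comp (h1.inner (𝕜 := ℝ) h2)).const_mul 2)).add
        ((Real.continuous_exp.tendsto _).comp (h2.inner (𝕜 := ℝ) h2))
      have e : Real.exp ⟪w, w⟫_ℝ - 2 * Real.exp ⟪w, w⟫_ℝ + Real.exp ⟪w, w⟫_ℝ = 0 := by ring
      rw [e] at this
      exact this
    have h4 := (Real.continuous_sqrt.tendsto _).comp h3
    simpa [Function.comp_def, dist_eq_norm, Real.sqrt_sq] using h4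
  obtain ⟨F, hF⟩ := cauchySeq_tendsto_of_complete hc
  refine ⟨F, ge_of_tendsto' hF fun n => cmDens_nonneg S ν hG _, fun t => ?_⟩
  have h1 := (tendsto_const_nhds (x := (cm_memLp S ν hG t).toLp _)).inner (𝕜 := ℝ) hF
  simp_rw [cmDens_inner'] at h1
  refine tendsto_nhds_unique h1 ?_
  exact (Real.continuous_exp.tendsto _).comp
    (tendsto_const_nhds.add (tendsto_const_nhds.inner hlim'))

lemma cm_shift [CompleteSpace H] [SecondCountableTopology H]
    (S : H →L[ℝ] H) (ν : Measure H) [IsProbabilityMeasure ν]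
    (hS : ∀ x y : H, ⟪S x, y⟫_ℝ = ⟪x, S y⟫_ℝ)
    (hG : ∀ v : H, ν.map (fun x => ⟪v, x⟫_ℝ) = gaussianReal 0 (‖S v‖ ^ 2).toNNReal)
    (w : H) (hw : w ∈ closure (Set.range S)) :
    ν.map (· + S w) ≪ ν := by
  obtain ⟨F, hF0, hF⟩ := cm_exists_density S ν hG w hw
  have hFint : Integrable F ν := (Lp.memLp F).integrable (by norm_num)
  have hF0' : 0 ≤ᵐ[ν] F := (Lp.coeFn_nonneg F).2 hF0
  set ρ := ν.withDensity (fun x => ENNReal.ofReal (F x)) with hρ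
  haveI : IsFiniteMeasure ρ := isFiniteMeasure_withDensity_ofReal hFint.2
  have hFm : AEMeasurable (fun x => ENNReal.ofReal (F x)) ν :=
    hFint.aestronglyMeasurable.aemeasurable.ennreal_ofReal
  have key : ν.map (· + S w) = ρ := by
    apply Measure.ext_of_charFun
    ext t
    have hm : mgf (fun x => ⟪t, x + S w⟫_ℝ) ν = mgf (fun x => ⟪t, x⟫_ℝ) ρ := by
      ext s
      have e1 : mgf (fun x => ⟪t, x + S w⟫_ℝ) ν s =
          Real.exp (‖S (s • t)‖ ^ 2 / 2 + ⟪S (s • t), w⟫_ℝ) := by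
        rw [Real.exp_add, ← cm_integral S ν hG, ← integral_mul_const, mgf]
        refine integral_congr_ae (ae_of_all _ fun x => ?_)
        simp only []
        rw [← Real.exp_add, hS, inner_add_right, inner_smul_left, inner_smul_left, mul_add]
        rfl
      rw [e1, ← hF, L2.inner_def, mgf, hρ,
        integral_withDensity_eq_integral_toReal_smul₀ hFm (by simp)]
      refine integral_congr_ae ?_
      filter_upwards [(cm_memLp S ν hG (s • t)).coeFn_toLp, hF0'] with x h1 h2
      rw [h1]
      simp only [Pi.zero_apply] at h2
      simp [ENNReal.toReal_ofReal h2, inner_smul_left]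
    have hI : integrableExpSet (fun x => ⟪t, x + S w⟫_ℝ) ν = Set.univ := by
      ext s
      simp only [integrableExpSet, Set.mem_ofPred_eq, Set.mem_univ, iff_true]
      refine ((cm_integrable S ν hG (s • t)).mul_const (Real.exp (s * ⟪t, S w⟫_ℝ))).congr
        (ae_of_all _ fun x => ?_)
      simp only []
      rw [← Real.exp_add, inner_add_right, inner_smul_left, mul_add]
      rfl
    have hz := eqOn_complexMGF_of_mgf hm (x := Complex.I) (by simp [hI])
    rw [charFun_apply, charFun_apply, integral_map (by fun_prop) (by fun_prop)]
    simp only [complexMGF] at hz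
    simpa [mul_comm, real_inner_comm] using hz
  rw [key]
  exact withDensity_absolutelyContinuous _ _

end CameronMartin

/-- **Theorem (Equivalence of the noised measure with the Gaussian).**
If `ν = N(0,C)` with `C` self-adjoint, positive, trace-class, and `μ` is a probability measure
with full mass on the Cameron–Martin space `C^{1/2}(H)`, then `ν * μ ∼ ν`. -/
theorem stmt_0 {H : Type*} [NormedAddCommGroup H] [InnerProductSpace ℝ H]
    [CompleteSpace H] [TopologicalSpace.SeparableSpace H]
    [MeasurableSpace H] [BorelSpace H]
    (C sqrtC : H →L[ℝ] H)
    (hsa : ∀ x y : H, ⟪C x, y⟫_ℝ = ⟪x, C y⟫_ℝ)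
    (hpos : ∀ x : H, x ≠ 0 → 0 < ⟪C x, x⟫_ℝ)
    (htc : IsTraceClass C)
    (hsqrt_sa : ∀ x y : H, ⟪sqrtC x, y⟫_ℝ = ⟪x, sqrtC y⟫_ℝ)
    (hsqrt_nonneg : ∀ x : H, 0 ≤ ⟪sqrtC x, x⟫_ℝ)
    (hsqrt : sqrtC ∘L sqrtC = C)
    (ν μ : Measure H) [IsProbabilityMeasure μ]
    (hν : IsCenteredGaussian ν C)
    (hμ : μ (Set.range sqrtC) = 1) :
    (ν ∗ μ) ≪ ν ∧ ν ≪ (ν ∗ μ) := by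
  obtain ⟨hp, hG0⟩ := hν
  have hq : ∀ v, ⟪C v, v⟫_ℝ = ‖sqrtC v‖ ^ 2 := fun v => by
    rw [← hsqrt, ContinuousLinearMap.comp_apply, hsqrt_sa, real_inner_self_eq_norm_sq]
  have hG : ∀ v : H, ν.map (fun x => ⟪v, x⟫_ℝ) = gaussianReal 0 (‖sqrtC v‖ ^ 2).toNNReal :=
    fun v => by rw [hG0, hq]
  haveI : SecondCountableTopology H := UniformSpace.secondCountable_of_separable H
  have hdense : ∀ w, w ∈ closure (Set.range sqrtC) := by
    have h : (LinearMap.range sqrtC.toLinearMap).topologicalClosure = ⊤ := by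
      rw [Submodule.topologicalClosure_eq_top_iff, Submodule.eq_bot_iff]
      intro x hx
      by_contra hne
      have h1 := hpos x hne
      rw [Submodule.mem_orthogonal] at hx
      have h2 := hx (sqrtC (sqrtC x)) ⟨_, rfl⟩
      rw [← hsqrt, ContinuousLinearMap.comp_apply, h2] at h1
      exact lt_irrefl _ h1
    intro w
    have : w ∈ (LinearMap.range sqrtC.toLinearMap).topologicalClosure := by rw [h]; trivial
    rw [← SetLike.mem_coe, Submodule.topologicalClosure_coe] at this
    exact this
  have hshift : ∀ h ∈ Set.range sqrtC, ν.map (· + h) ≪ ν := by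
    rintro _ ⟨w, rfl⟩
    exact cm_shift sqrtC ν hsqrt_sa hG w (hdense w)
  have hconv : ∀ A, MeasurableSet A → (ν ∗ μ) A = ∫⁻ h, ν.map (· + h) A ∂μ := by
    intro A hA
    rw [Measure.conv_comm, ← lintegral_indicator_one hA,
      Measure.lintegral_conv (measurable_one.indicator hA)]
    refine lintegral_congr fun h => ?_
    rw [← lintegral_indicator_one hA, lintegral_map (measurable_one.indicator hA) (by fun_prop)]
    simp_rw [add_comm]
  have hmeas : ∀ A, MeasurableSet A → Measurable fun h => ν.map (· + h) A := by
    intro A hA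
    have : Measurable fun h => ν (Prod.mk h ⁻¹' {p : H × H | p.2 + p.1 ∈ A}) :=
      measurable_measure_prodMk_left ((measurable_snd.add measurable_fst) hA)
    convert this using 2 with h
    rw [Measure.map_apply (by fun_prop) hA]
    rfl
  constructor
  · refine Measure.AbsolutelyContinuous.mk fun A hA h0 => ?_
    rw [hconv A hA, lintegral_eq_zero_iff (hmeas A hA)]
    have hms : MeasurableSet {h | ν.map (· + h) A = 0} := hmeas A hA (measurableSet_singleton 0)
    have : μ {h | ν.map (· + h) A = 0} = 1 := by
      refine le_antisymm prob_le_one ?_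
      rw [← hμ]
      exact measure_mono fun h hh => hshift h hh h0
    exact (prob_compl_eq_zero_iff hms).2 this
  · refine Measure.AbsolutelyContinuous.mk fun A hA h0 => ?_
    rw [hconv A hA, lintegral_eq_zero_iff (hmeas A hA)] at h0
    have hex : ∃ h ∈ Set.range sqrtC, ν.map (· + h) A = 0 := by
      by_contra! hcon
      have : μ (Set.range sqrtC) = 0 := measure_mono_null (fun h hh => hcon h hh) h0
      rw [hμ] at this
      exact one_ne_zero this
    obtain ⟨_, ⟨w, rfl⟩, hz⟩ := hex
    rw [Measure.map_apply (by fun_prop) hA] at hz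
    have h2 := hshift (-(sqrtC w)) ⟨-w, map_neg _ _⟩ hz
    rw [Measure.map_apply (by fun_prop) (hA.preimage (by fun_prop))] at h2
    simpa [Set.preimage_preimage] using h2
end

section
/- Let H be a real separable Hilbert space, ν = N(0,C) with C self-adjoint, positive, trace-class, μ a probability measure on H, and A : H → H a linear operator with A(H) ⊆ C^{1/2}(H). Then ν * (μ ∘ A^{-1}) is equivalent to ν. -/
open MeasureTheory ProbabilityTheory
open scoped ENNReal InnerProductSpace MeasureTheory

open Filter Topology Complex in
lemma aux_limit {Ω : Type*} [MeasurableSpace Ω] (ν : Measure Ω) [IsProbabilityMeasure ν]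
    (X : ℕ → Ω → ℝ) (Y : Ω → ℝ) (hX : ∀ n, Measurable (X n)) (hY : Measurable Y)
    (a : ℕ → ℝ) (b : ℝ) (ha : ∀ n, 0 ≤ a n) (hb : 0 ≤ b)
    (hlaw : ∀ n, ν.map (X n) = gaussianReal 0 (a n).toNNReal)
    (hab : Tendsto a atTop (𝓝 b))
    (hlim : ∀ᵐ x ∂ν, Tendsto (fun n => X n x) atTop (𝓝 (Y x))) :
    ν.map Y = gaussianReal 0 b.toNNReal := by
  have : IsProbabilityMeasure (ν.map Y) := Measure.isProbabilityMeasure_map hY.aemeasurable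
  apply Measure.ext_of_charFun
  ext t
  have h1 : Tendsto (fun n => charFun (ν.map (X n)) t) atTop (𝓝 (charFun (ν.map Y) t)) := by
    simp_rw [charFun_apply_real]
    rw [integral_map hY.aemeasurable (by fun_prop)]
    simp_rw [fun n => integral_map (hX n).aemeasurable (μ := ν)
      (f := fun x : ℝ => cexp (t * x * I)) (by fun_prop)]
    refine tendsto_integral_of_dominated_convergence (fun _ => 1) ?_ (by simp) ?_ ?_
    · intro n
      have := hX n
      exact Measurable.aestronglyMeasurable (by fun_prop)
    · intro n
      filter_upwards with x
      have : (t : ℂ) * (X n x : ℂ) * I = ((t * X n x : ℝ) : ℂ) * I := by push_cast; ring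
      rw [this, Complex.norm_exp_ofReal_mul_I]
    · filter_upwards [hlim] with x hx
      have hc : Continuous (fun y : ℝ => cexp (t * y * I)) := by fun_prop
      exact (hc.tendsto _).comp hx
  refine tendsto_nhds_unique h1 ?_
  simp_rw [hlaw, charFun_gaussianReal, Real.coe_toNNReal _ (ha _), Real.coe_toNNReal _ hb]
  have hc : Continuous (fun y : ℝ => cexp (t * (0:ℝ) * I - y * t ^ 2 / 2)) := by fun_prop
  exact (hc.tendsto _).comp hab

open Filter Topology in
lemma aux_pw {H : Type*} [NormedAddCommGroup H] [InnerProductSpace ℝ H]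
    [CompleteSpace H] [TopologicalSpace.SeparableSpace H]
    [MeasurableSpace H] [BorelSpace H]
    (S : H →L[ℝ] H)
    (hsa : ∀ x y : H, ⟪S x, y⟫_ℝ = ⟪x, S y⟫_ℝ)
    (hinj : ∀ x, S x = 0 → x = 0)
    (ν : Measure H) [IsProbabilityMeasure ν]
    (hν : ∀ v : H, ν.map (fun x => ⟪v, x⟫_ℝ) = gaussianReal 0 (‖S v‖ ^ 2).toNNReal) (k : H) :
    ∃ Ψ : H → ℝ, Measurable Ψ ∧
      ∀ w, ν.map (fun x => Ψ x + ⟪w, x⟫_ℝ) = gaussianReal 0 (‖k + S w‖ ^ 2).toNNReal := by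
  have hm : ∀ v : H, Measurable (fun x : H => ⟪v, x⟫_ℝ) := fun v => by fun_prop
  have hdense : k ∈ closure (Set.range S) := by
    have h : (LinearMap.range S.toLinearMap).topologicalClosure = ⊤ := by
      rw [Submodule.topologicalClosure_eq_top_iff, Submodule.eq_bot_iff]
      intro x hx
      apply hinj
      rw [← inner_self_eq_zero (𝕜 := ℝ), hsa, real_inner_comm]
      exact hx (S (S x)) ⟨S x, rfl⟩
    have : k ∈ (LinearMap.range S.toLinearMap).topologicalClosure := by rw [h]; trivial
    exact this
  obtain ⟨s, hs, hlim⟩ := mem_closure_iff_seq_limit.1 hdense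
  choose u hu using hs
  have hmem : ∀ v : H, MemLp (fun x : H => ⟪v, x⟫_ℝ) 2 ν := fun v => by
    have := memLp_id_gaussianReal' (μ := 0) (v := (‖S v‖ ^ 2).toNNReal) 2 (by simp)
    rw [← hν v, memLp_map_measure_iff (by fun_prop) (by fun_prop)] at this
    exact this
  have hnorm : ∀ v : H, ‖(hmem v).toLp‖ = ‖S v‖ := fun v => by
    have h1 : ∫ x, ⟪v, x⟫_ℝ ^ 2 ∂ν = ‖S v‖ ^ 2 := by
      have h := variance_id_gaussianReal (μ := 0) (v := (‖S v‖ ^ 2).toNNReal)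
      rw [variance_eq_integral (by fun_prop)] at h
      simp only [id, integral_id_gaussianReal, sub_zero] at h
      rw [← hν v, integral_map (by fun_prop) (by fun_prop),
        Real.coe_toNNReal _ (by positivity)] at h
      exact h
    have h2 : ‖(hmem v).toLp‖ ^ 2 = ‖S v‖ ^ 2 := by
      rw [← h1, ← real_inner_self_eq_norm_sq, L2.inner_def]
      apply integral_congr_ae
      filter_upwards [(hmem v).coeFn_toLp] with x hx
      rw [hx, real_inner_self_eq_norm_sq, Real.norm_eq_abs, sq_abs]
    exact (sq_eq_sq₀ (norm_nonneg _) (norm_nonneg _)).1 h2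
  have hdist : ∀ v w : H, dist (hmem v).toLp (hmem w).toLp = dist (S v) (S w) := fun v w => by
    rw [dist_eq_norm, dist_eq_norm, ← map_sub, ← hnorm, ← MemLp.toLp_sub]
    congr 2
    ext x
    simp [inner_sub_left]
  have hc : CauchySeq (fun n => (hmem (u n)).toLp) := by
    have hcs := hlim.cauchySeq
    rw [Metric.cauchySeq_iff] at hcs ⊢
    simpa only [hdist, hu] using hcs
  obtain ⟨g, hg⟩ := cauchySeq_tendsto_of_complete hc
  obtain ⟨ns, hns, hae⟩ := (tendstoInMeasure_of_tendsto_Lp hg).exists_seq_tendsto_ae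
  refine ⟨g, (Lp.stronglyMeasurable g).measurable, fun w => ?_⟩
  have hgm : Measurable g := (Lp.stronglyMeasurable g).measurable
  refine aux_limit ν (fun n x => ⟪u (ns n) + w, x⟫_ℝ) _ (fun n => hm _) (hgm.add (hm w))
    (fun n => ‖S (u (ns n) + w)‖ ^ 2) _ (fun n => by positivity) (by positivity)
    (fun n => hν _) ?_ ?_
  · simp only [map_add, hu]
    exact (((hlim.comp hns.tendsto_atTop).add_const (S w)).norm).pow 2
  · have hall : ∀ᵐ x ∂ν, ∀ n, ((hmem (u (ns n))).toLp : Lp ℝ 2 ν) x = ⟪u (ns n), x⟫_ℝ :=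
      ae_all_iff.2 fun n => (hmem (u (ns n))).coeFn_toLp
    filter_upwards [hae, hall] with x hx hx2
    simp only [inner_add_left]
    simp only [hx2] at hx
    exact hx.add_const _

lemma aux_cm {H : Type*} [NormedAddCommGroup H] [InnerProductSpace ℝ H]
    [CompleteSpace H] [TopologicalSpace.SeparableSpace H]
    [MeasurableSpace H] [BorelSpace H]
    (S : H →L[ℝ] H)
    (hsa : ∀ x y : H, ⟪S x, y⟫_ℝ = ⟪x, S y⟫_ℝ)
    (hinj : ∀ x, S x = 0 → x = 0)
    (ν : Measure H) [IsProbabilityMeasure ν]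
    (hν : ∀ v : H, ν.map (fun x => ⟪v, x⟫_ℝ) = gaussianReal 0 (‖S v‖ ^ 2).toNNReal) (k : H) :
    ν.map (fun x => x + S k) ≪ ν ∧ ν ≪ ν.map (fun x => x + S k) := by
  obtain ⟨Ψ, hΨ, hlaw⟩ := aux_pw S hsa hinj ν hν k
  have hmgf : ∀ w, ∫ x, Real.exp (Ψ x + ⟪w, x⟫_ℝ) ∂ν = Real.exp (‖k + S w‖ ^ 2 / 2) := fun w => by
    have := mgf_gaussianReal (hlaw w) 1
    rw [Real.coe_toNNReal _ (by positivity)] at this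
    simpa [mgf] using this
  let D : H → ℝ := fun x => Real.exp (Ψ x - ‖k‖ ^ 2 / 2)
  have hD : Measurable D := by fun_prop
  have hDw : ∀ w, ∫ x, D x * Real.exp ⟪w, x⟫_ℝ ∂ν
      = Real.exp (⟪w, S k⟫_ℝ + ‖S w‖ ^ 2 / 2) := fun w => by
    have : ∀ x, D x * Real.exp ⟪w, x⟫_ℝ =
        Real.exp (-(‖k‖ ^ 2 / 2)) * Real.exp (Ψ x + ⟪w, x⟫_ℝ) := fun x => by
      simp only [D, ← Real.exp_add]; congr 1; ring
    simp_rw [this]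
    rw [integral_const_mul, hmgf, ← Real.exp_add, norm_add_sq_real, ← hsa w k,
      real_inner_comm k (S w)]
    congr 1; ring
  have hD1 : ∫ x, D x ∂ν = 1 := by simpa using hDw 0
  have hDint : Integrable D ν := by
    by_contra h
    rw [integral_undef h] at hD1
    exact zero_ne_one hD1
  let ν' : Measure H := ν.withDensity (fun x => ENNReal.ofReal (D x))
  have hp' : IsProbabilityMeasure ν' := ⟨by
    rw [withDensity_apply _ MeasurableSet.univ, Measure.restrict_univ,
      ← ofReal_integral_eq_lintegral_ofReal hDint (ae_of_all _ fun x => (Real.exp_pos _).le), hD1,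
      ENNReal.ofReal_one]⟩
  have hsh : Measurable (fun x : H => x + S k) := by fun_prop
  have hp : IsProbabilityMeasure (ν.map (fun x => x + S k)) :=
    Measure.isProbabilityMeasure_map hsh.aemeasurable
  have hm1 : ∀ v t, mgf (fun x => ⟪v, x⟫_ℝ) ν' t
      = Real.exp (t * ⟪v, S k⟫_ℝ + t ^ 2 * ‖S v‖ ^ 2 / 2) := fun v t => by
    rw [mgf, integral_withDensity_eq_integral_toReal_smul (by fun_prop) (by simp)]
    have := hDw (t • v)
    simp only [inner_smul_left, map_smul, norm_smul, mul_pow, Real.norm_eq_abs, sq_abs] at this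
    simpa [D, ENNReal.toReal_ofReal, (Real.exp_pos _).le] using this
  have hm2 : ∀ v t, mgf (fun x => ⟪v, x⟫_ℝ) (ν.map (fun x => x + S k)) t
      = Real.exp (t * ⟪v, S k⟫_ℝ + t ^ 2 * ‖S v‖ ^ 2 / 2) := fun v t => by
    rw [mgf, integral_map hsh.aemeasurable (by fun_prop)]
    have := mgf_gaussianReal (hν v) t
    rw [Real.coe_toNNReal _ (by positivity), mgf] at this
    simp_rw [inner_add_right, mul_add, Real.exp_add]
    rw [integral_mul_const, this, mul_comm]
    congr 2; ring
  have heq : ν.map (fun x => x + S k) = ν' := by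
    apply Measure.ext_of_charFun
    ext v
    have h := eqOn_complexMGF_of_mgf (X := fun x => ⟪v, x⟫_ℝ) (Y := fun x => ⟪v, x⟫_ℝ)
      (μ := ν.map (fun x => x + S k)) (μ' := ν') (by ext t; rw [hm1, hm2])
    have huniv : integrableExpSet (fun x => ⟪v, x⟫_ℝ) (ν.map (fun x => x + S k)) = Set.univ := by
      ext t
      simp only [integrableExpSet, Set.mem_ofPred_eq, Set.mem_univ, iff_true]
      rw [← mgf_pos_iff, hm2]
      exact Real.exp_pos _
    have h2 := h (x := Complex.I) (by simp [huniv])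
    simp only [complexMGF] at h2
    simp only [charFun_apply, real_inner_comm v, mul_comm _ Complex.I]
    simpa only [real_inner_comm v] using h2
  rw [heq]
  refine ⟨withDensity_absolutelyContinuous _ _, withDensity_absolutelyContinuous' ?_ ?_⟩
  · fun_prop
  · exact ae_of_all _ fun x => by simp [D, Real.exp_pos]

/-- **Corollary.** If `ν = N(0,C)` and `A : H → H` is a linear operator with
`A(H) ⊆ C^{1/2}(H)`, then `ν * (μ ∘ A⁻¹) ∼ ν`. -/
theorem stmt_1 {H : Type*} [NormedAddCommGroup H] [InnerProductSpace ℝ H]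
    [CompleteSpace H] [TopologicalSpace.SeparableSpace H]
    [MeasurableSpace H] [BorelSpace H]
    (C sqrtC : H →L[ℝ] H)
    (hsa : ∀ x y : H, ⟪C x, y⟫_ℝ = ⟪x, C y⟫_ℝ)
    (hpos : ∀ x : H, x ≠ 0 → 0 < ⟪C x, x⟫_ℝ)
    (htc : IsTraceClass C)
    (hsqrt_sa : ∀ x y : H, ⟪sqrtC x, y⟫_ℝ = ⟪x, sqrtC y⟫_ℝ)
    (hsqrt_nonneg : ∀ x : H, 0 ≤ ⟪sqrtC x, x⟫_ℝ)
    (hsqrt : sqrtC ∘L sqrtC = C)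
    (A : H →L[ℝ] H) (hA : Set.range A ⊆ Set.range sqrtC)
    (ν μ : Measure H) [IsProbabilityMeasure μ]
    (hν : IsCenteredGaussian ν C) :
    (ν ∗ (μ.map A)) ≪ ν ∧ ν ≪ (ν ∗ (μ.map A)) := by
  have hprob := hν.1
  have hS : ∀ v, ⟪C v, v⟫_ℝ = ‖sqrtC v‖ ^ 2 := fun v => by
    rw [← hsqrt, ContinuousLinearMap.comp_apply, hsqrt_sa, real_inner_self_eq_norm_sq]
  have hinj : ∀ x, sqrtC x = 0 → x = 0 := fun x hx => by
    by_contra hne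
    have := hpos x hne
    rw [hS, hx] at this
    simp at this
  have hcm := aux_cm sqrtC hsqrt_sa hinj ν (fun v => by rw [hν.2 v, hS])
  have hAm : Measurable A := A.continuous.measurable
  have hconv : ∀ s, MeasurableSet s →
      (ν ∗ (μ.map A)) s = ∫⁻ y, ν.map (fun x => x + A y) s ∂μ := fun s hs => by
    have hadd : Measurable (fun p : H × H => p.1 + p.2) := by fun_prop
    have : IsProbabilityMeasure (μ.map A) := Measure.isProbabilityMeasure_map hAm.aemeasurable
    rw [Measure.conv, Measure.map_apply hadd hs, Measure.prod_apply_symm (hadd hs),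
      lintegral_map (measurable_measure_prodMk_right (hadd hs)) hAm]
    refine lintegral_congr fun y => ?_
    rw [Measure.map_apply (by fun_prop) hs]
    rfl
  have hmeas : ∀ s, MeasurableSet s → Measurable (fun y => ν.map (fun x => x + A y) s) :=
    fun s hs => by
    have hadd : Measurable (fun p : H × H => p.1 + A p.2) := by fun_prop
    have := measurable_measure_prodMk_right (μ := ν) (hadd hs)
    convert! this using 2 with y
    rw [Measure.map_apply (by fun_prop) hs]
    rfl
  constructor
  · refine Measure.AbsolutelyContinuous.mk fun s hs h0 => ?_
    rw [hconv s hs]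
    refine (lintegral_congr fun y => ?_).trans lintegral_zero
    obtain ⟨k, hk⟩ := hA ⟨y, rfl⟩
    rw [← hk]
    exact (hcm k).1 h0
  · refine Measure.AbsolutelyContinuous.mk fun s hs h0 => ?_
    rw [hconv s hs, lintegral_eq_zero_iff (hmeas s hs)] at h0
    obtain ⟨y, hy⟩ := h0.exists
    obtain ⟨k, hk⟩ := hA ⟨y, rfl⟩
    replace hy : ν.map (fun x => x + A y) s = 0 := hy
    rw [← hk] at hy
    exact (hcm k).2 hy
end

section
/- Let μ₀ = N(0,C) be a Gaussian measure on a separable Hilbert space H with C self-adjoint, positive, trace-class, and let μ satisfy μ(C^{1/2}(H)) = 1. Fix 0 < β₁ ≤ ... ≤ β_T < 1 and set α_t = Π_{s=1}^t (1−β_s). Define u_t = √α_t u₀ + √(1−α_t) η with u₀ ∼ μ and η ∼ N(0,C) independent. Then the law ν_t of u_t is equivalent to the Gaussian measure N(0, (1−α_t)C) for every t ≥ 1. -/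
open MeasureTheory ProbabilityTheory
open scoped ENNReal InnerProductSpace MeasureTheory

/-- The DDPM cumulative product `α_t = Π_{s=1}^t (1 − β_s)`. -/
noncomputable def alphaProd (β : ℕ → ℝ) (t : ℕ) : ℝ :=
  ∏ s ∈ Finset.Icc 1 t, (1 - β s)

section Helpers

variable {H : Type*} [NormedAddCommGroup H] [InnerProductSpace ℝ H]
    [CompleteSpace H] [TopologicalSpace.SeparableSpace H]
    [MeasurableSpace H] [BorelSpace H]

/-- Measures on a Hilbert space with the same finite exponential moments agree. -/
lemma ext_of_exp_moments (P Q : Measure H) [IsProbabilityMeasure P] [IsProbabilityMeasure Q]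
    (hint : ∀ t : H, Integrable (fun x => Real.exp ⟪t, x⟫_ℝ) P)
    (h : ∀ t : H, ∫ x, Real.exp ⟪t, x⟫_ℝ ∂P = ∫ x, Real.exp ⟪t, x⟫_ℝ ∂Q) : P = Q := by
  have : SecondCountableTopology H := UniformSpace.secondCountable_of_separable H
  apply Measure.ext_of_charFun
  ext t
  have hm : mgf (fun x => ⟪x, t⟫_ℝ) P = mgf (fun x => ⟪x, t⟫_ℝ) Q := by
    ext r
    have := h (r • t)
    simpa [mgf, inner_smul_left, real_inner_comm] using this
  have hs : integrableExpSet (fun x => ⟪x, t⟫_ℝ) P = Set.univ := by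
    ext r
    have := hint (r • t)
    simpa [integrableExpSet, inner_smul_left, real_inner_comm] using this
  have := eqOn_complexMGF_of_mgf hm (x := Complex.I) (by simp [hs])
  simpa [complexMGF, charFun_apply, mul_comm] using this

lemma gauss_mgf {ρ : Measure H} {D : H →L[ℝ] H} (hρ : IsCenteredGaussian ρ D)
    (hD : ∀ x, 0 ≤ ⟪D x, x⟫_ℝ) (v : H) :
    ∫ x, Real.exp ⟪v, x⟫_ℝ ∂ρ = Real.exp (⟪D v, v⟫_ℝ / 2) := by
  have := mgf_gaussianReal (hρ.2 v) 1
  simpa [mgf, hD v] using this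

lemma gauss_int {ρ : Measure H} {D : H →L[ℝ] H} (hρ : IsCenteredGaussian ρ D)
    (hD : ∀ x, 0 ≤ ⟪D x, x⟫_ℝ) (v : H) :
    Integrable (fun x => Real.exp ⟪v, x⟫_ℝ) ρ := by
  by_contra hc
  have h1 := gauss_mgf hρ hD v
  rw [integral_undef hc] at h1
  exact (Real.exp_pos _).ne h1

lemma gauss_unique {ρ ρ' : Measure H} {D : H →L[ℝ] H} (hρ : IsCenteredGaussian ρ D)
    (hρ' : IsCenteredGaussian ρ' D) (hD : ∀ x, 0 ≤ ⟪D x, x⟫_ℝ) : ρ = ρ' := by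
  have := hρ.1
  have := hρ'.1
  exact ext_of_exp_moments _ _ (gauss_int hρ hD)
    (fun t => by rw [gauss_mgf hρ hD, gauss_mgf hρ' hD])

lemma gauss_shift {ρ : Measure H} {D : H →L[ℝ] H} (hρ : IsCenteredGaussian ρ D)
    (hsa : ∀ x y : H, ⟪D x, y⟫_ℝ = ⟪x, D y⟫_ℝ)
    (hD : ∀ x, 0 ≤ ⟪D x, x⟫_ℝ) (v : H) :
    ρ.map (fun y => y + D v) = ρ.tilted (fun x => ⟪v, x⟫_ℝ) := by
  have := hρ.1
  have : SecondCountableTopology H := UniformSpace.secondCountable_of_separable H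
  have hmeas : Measurable (fun y : H => y + D v) := by fun_prop
  have : IsProbabilityMeasure (ρ.map (fun y => y + D v)) :=
    Measure.isProbabilityMeasure_map hmeas.aemeasurable
  have : IsProbabilityMeasure (ρ.tilted (fun x => ⟪v, x⟫_ℝ)) :=
    isProbabilityMeasure_tilted (gauss_int hρ hD v)
  have he : ∀ t y : H, Real.exp ⟪t, y + D v⟫_ℝ = Real.exp ⟪t, y⟫_ℝ * Real.exp ⟪t, D v⟫_ℝ := by
    intro t y
    rw [inner_add_right, Real.exp_add]
  apply ext_of_exp_moments
  · intro t
    rw [integrable_map_measure (by fun_prop) hmeas.aemeasurable]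
    simp only [Function.comp_def, he]
    exact (gauss_int hρ hD t).mul_const _
  · intro t
    rw [integral_map hmeas.aemeasurable (by fun_prop), integral_tilted]
    simp only [he, smul_eq_mul, gauss_mgf hρ hD]
    rw [integral_mul_const, gauss_mgf hρ hD]
    have h2 : ∀ x : H, Real.exp ⟪v, x⟫_ℝ / Real.exp (⟪D v, v⟫_ℝ / 2) * Real.exp ⟪t, x⟫_ℝ
        = Real.exp ⟪v + t, x⟫_ℝ * Real.exp (-(⟪D v, v⟫_ℝ / 2)) := by
      intro x
      rw [inner_add_left, Real.exp_add, Real.exp_neg]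
      ring
    simp only [h2]
    rw [integral_mul_const, gauss_mgf hρ hD, ← Real.exp_add, ← Real.exp_add]
    congr 1
    have h3 : ⟪D v, t⟫_ℝ = ⟪t, D v⟫_ℝ := real_inner_comm _ _
    have h4 : ⟪D t, v⟫_ℝ = ⟪t, D v⟫_ℝ := hsa _ _
    rw [map_add, inner_add_left, inner_add_right, inner_add_right, h3, h4]
    ring

lemma gauss_shift_bound {ρ : Measure H} {D : H →L[ℝ] H} (hρ : IsCenteredGaussian ρ D)
    (hsa : ∀ x y : H, ⟪D x, y⟫_ℝ = ⟪x, D y⟫_ℝ)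
    (hD : ∀ x, 0 ≤ ⟪D x, x⟫_ℝ) (v : H) (A : Set H) (hA : MeasurableSet A) :
    ρ ((fun y => y + D v) ⁻¹' A) ≤
      ENNReal.ofReal (Real.exp ⟪D v, v⟫_ℝ) ^ (1 / 2 : ℝ) * ρ A ^ (1 / 2 : ℝ) := by
  have := hρ.1
  have : SecondCountableTopology H := UniformSpace.secondCountable_of_separable H
  have hmeas : Measurable (fun y : H => y + D v) := by fun_prop
  rw [← Measure.map_apply hmeas hA, gauss_shift hρ hsa hD, tilted_apply' _ _ hA,
    gauss_mgf hρ hD, ← lintegral_indicator hA]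
  set f : H → ℝ≥0∞ := fun a => ENNReal.ofReal
    (Real.exp ⟪v, a⟫_ℝ / Real.exp (⟪D v, v⟫_ℝ / 2)) with hf
  have hfm : Measurable f := by fun_prop
  have h1 := ENNReal.lintegral_mul_le_Lp_mul_Lq ρ Real.HolderConjugate.two_two
    hfm.aemeasurable (g := A.indicator 1) ((measurable_one.indicator hA).aemeasurable)
  have h2 : ∀ a, (f * A.indicator (1 : H → ℝ≥0∞)) a = A.indicator f a := by
    intro a
    by_cases ha : a ∈ A <;> simp [ha]
  have h3 : ∀ a, (A.indicator (1 : H → ℝ≥0∞) a) ^ (2 : ℝ) = A.indicator 1 a := by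
    intro a
    by_cases ha : a ∈ A <;> simp [ha]
  have h4 : ∫⁻ a, f a ^ (2 : ℝ) ∂ρ = ENNReal.ofReal (Real.exp ⟪D v, v⟫_ℝ) := by
    have h5 : ∀ a, f a ^ (2 : ℝ) = ENNReal.ofReal
        (Real.exp ⟪(2 : ℝ) • v, a⟫_ℝ * Real.exp (-⟪D v, v⟫_ℝ)) := by
      intro a
      rw [hf]
      simp only
      rw [ENNReal.ofReal_rpow_of_nonneg (by positivity) (by norm_num), ← Real.exp_sub,
        ← Real.exp_mul, ← Real.exp_add, inner_smul_left]
      congr 2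
      simp
      ring
    simp only [h5]
    rw [← ofReal_integral_eq_lintegral_ofReal ((gauss_int hρ hD _).mul_const _)
      (Filter.Eventually.of_forall fun a => by positivity), integral_mul_const,
      gauss_mgf hρ hD, ← Real.exp_add]
    congr 2
    simp [inner_smul_left, inner_smul_right]
    ring
  simp only [h2, h3, h4, lintegral_indicator_one hA] at h1
  exact h1

lemma gauss_shift_ac {ρ : Measure H} {D : H →L[ℝ] H} (hρ : IsCenteredGaussian ρ D)
    (hsa : ∀ x y : H, ⟪D x, y⟫_ℝ = ⟪x, D y⟫_ℝ)
    (hD : ∀ x, 0 ≤ ⟪D x, x⟫_ℝ) (v : ℕ → H) (h : H) (M : ℝ)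
    (hv : Filter.Tendsto (fun n => D (v n)) Filter.atTop (nhds h))
    (hM : ∀ᶠ n in Filter.atTop, ⟪D (v n), v n⟫_ℝ ≤ M) (A : Set H) (hA : ρ A = 0) :
    ρ ((fun y => y + h) ⁻¹' A) = 0 := by
  have := hρ.1
  have : SecondCountableTopology H := UniformSpace.secondCountable_of_separable H
  set K : ℝ≥0∞ := ENNReal.ofReal (Real.exp M) ^ (1 / 2 : ℝ) with hK
  have hKtop : K ≠ ⊤ := by
    rw [hK]
    exact ENNReal.rpow_ne_top_of_nonneg (by norm_num) ENNReal.ofReal_ne_top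
  have key : ∀ U : Set H, IsOpen U → ρ ((fun y => y + h) ⁻¹' U) ≤ K * ρ U ^ (1 / 2 : ℝ) := by
    intro U hU
    have hmeas : ∀ w : H, MeasurableSet ((fun y : H => y + w) ⁻¹' U) := fun w =>
      (hU.preimage (by fun_prop)).measurableSet
    calc ρ ((fun y => y + h) ⁻¹' U)
        = ∫⁻ y, ((fun y => y + h) ⁻¹' U).indicator 1 y ∂ρ := (lintegral_indicator_one (hmeas h)).symm
      _ ≤ ∫⁻ y, Filter.liminf (fun n => ((fun y => y + D (v n)) ⁻¹' U).indicator
            (1 : H → ℝ≥0∞) y) Filter.atTop ∂ρ := by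
          apply lintegral_mono
          intro y
          by_cases hy : y + h ∈ U
          · refine Filter.le_liminf_of_le (by isBoundedDefault) ?_
            have := (hv.const_add y).eventually (hU.mem_nhds hy)
            filter_upwards [this] with n hn
            have hn' : y + D (v n) ∈ U := hn
            simp [Set.indicator, hn', hy]
          · simp [Set.indicator, hy]
      _ ≤ Filter.liminf (fun n => ∫⁻ y, ((fun y => y + D (v n)) ⁻¹' U).indicator
            (1 : H → ℝ≥0∞) y ∂ρ) Filter.atTop :=
          lintegral_liminf_le (fun n => measurable_one.indicator (hmeas _))
      _ ≤ K * ρ U ^ (1 / 2 : ℝ) := by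
          refine Filter.liminf_le_of_frequently_le' (Filter.Eventually.frequently ?_)
          filter_upwards [hM] with n hn
          rw [lintegral_indicator_one (hmeas _)]
          refine (gauss_shift_bound hρ hsa hD (v n) U hU.measurableSet).trans ?_
          rw [hK]
          gcongr
  have hlim : Filter.Tendsto (fun ε : ℝ≥0∞ => K * ε ^ (1 / 2 : ℝ)) (nhds 0) (nhds 0) := by
    have h1 : Filter.Tendsto (fun ε : ℝ≥0∞ => ε ^ (1 / 2 : ℝ)) (nhds 0) (nhds 0) := by
      have := (ENNReal.continuous_rpow_const (y := (1 / 2 : ℝ))).tendsto 0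
      simpa using this
    simpa using ENNReal.Tendsto.const_mul h1 (Or.inr hKtop)
  have hle : ∀ᶠ ε : ℝ≥0∞ in nhdsWithin 0 (Set.Ioi 0),
      ρ ((fun y => y + h) ⁻¹' A) ≤ K * ε ^ (1 / 2 : ℝ) := by
    filter_upwards [self_mem_nhdsWithin] with ε hε
    obtain ⟨U, hAU, hUo, hU⟩ := A.exists_isOpen_lt_of_lt (μ := ρ) ε (by rw [hA]; exact hε)
    refine (measure_mono (Set.preimage_mono hAU)).trans ((key U hUo).trans ?_)
    gcongr
  exact le_antisymm (ge_of_tendsto (hlim.mono_left nhdsWithin_le_nhds) hle) (zero_le)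

end Helpers

/-- **Lemma (DDPM forward process in infinite dimensions).**
Let `μ₀ = N(0,C)` with `C` self-adjoint, positive, trace-class, and `μ` a probability measure
with `μ(C^{1/2}(H)) = 1`. Fix `0 < β₁ ≤ ⋯ ≤ β_T < 1` and `α_t = Π_{s=1}^t (1−β_s)`. Then the
law `ν_t` of `u_t = √α_t u₀ + √(1−α_t) η` (`u₀ ∼ μ`, `η ∼ N(0,C)` independent) is equivalent
to the Gaussian `N(0, (1−α_t)C)`, for every `1 ≤ t ≤ T`. -/
theorem stmt_15 {H : Type*} [NormedAddCommGroup H] [InnerProductSpace ℝ H]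
    [CompleteSpace H] [TopologicalSpace.SeparableSpace H]
    [MeasurableSpace H] [BorelSpace H]
    (C sqrtC : H →L[ℝ] H)
    (hsa : ∀ x y : H, ⟪C x, y⟫_ℝ = ⟪x, C y⟫_ℝ)
    (hpos : ∀ x : H, x ≠ 0 → 0 < ⟪C x, x⟫_ℝ)
    (htc : IsTraceClass C)
    (hsqrt : sqrtC ∘L sqrtC = C)
    (hsqrt_sa : ∀ x y : H, ⟪sqrtC x, y⟫_ℝ = ⟪x, sqrtC y⟫_ℝ)
    (hsqrt_nonneg : ∀ x : H, 0 ≤ ⟪sqrtC x, x⟫_ℝ)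
    (ν₀ μ : Measure H) [IsProbabilityMeasure μ]
    (hν₀ : IsCenteredGaussian ν₀ C)
    (hμ : μ (Set.range sqrtC) = 1)
    (T : ℕ) (β : ℕ → ℝ)
    (hβ1 : 0 < β 1) (hβT : β T < 1)
    (hβmono : MonotoneOn β (Set.Icc 1 T)) :
    ∀ t : ℕ, 1 ≤ t → t ≤ T →
      ∀ ρ : Measure H, IsCenteredGaussian ρ ((1 - alphaProd β t) • C) →
        ((μ.map fun u => Real.sqrt (alphaProd β t) • u) ∗
            (ν₀.map fun u => Real.sqrt (1 - alphaProd β t) • u)) ≪ ρ ∧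
          ρ ≪ ((μ.map fun u => Real.sqrt (alphaProd β t) • u) ∗
            (ν₀.map fun u => Real.sqrt (1 - alphaProd β t) • u)) := by
  intro t ht1 htT ρ hρ
  have : SecondCountableTopology H := UniformSpace.secondCountable_of_separable H
  have hβs : ∀ s ∈ Finset.Icc 1 t, 0 < 1 - β s ∧ 1 - β s < 1 := by
    intro s hs
    rw [Finset.mem_Icc] at hs
    have h1 : β 1 ≤ β s := hβmono ⟨le_rfl, by omega⟩ ⟨hs.1, by omega⟩ hs.1
    have h2 : β s ≤ β T := hβmono ⟨hs.1, by omega⟩ ⟨by omega, le_rfl⟩ (by omega)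
    constructor <;> linarith
  have hα0 : 0 < alphaProd β t := Finset.prod_pos fun s hs => (hβs s hs).1
  have hα1 : alphaProd β t < 1 := by
    have : alphaProd β t < ∏ s ∈ Finset.Icc 1 t, (1 : ℝ) :=
      Finset.prod_lt_prod_of_nonempty (fun s hs => (hβs s hs).1) (fun s hs => (hβs s hs).2)
        ⟨1, by simp [ht1]⟩
    simpa using this
  set a := alphaProd β t
  have hs : 0 < 1 - a := by linarith
  have hCnn : ∀ x, 0 ≤ ⟪C x, x⟫_ℝ := by
    intro x
    by_cases hx : x = 0
    · simp [hx]
    · exact (hpos x hx).le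
  have hDsa : ∀ x y : H, ⟪((1 - a) • C) x, y⟫_ℝ = ⟪x, ((1 - a) • C) y⟫_ℝ := by
    intro x y
    simp [inner_smul_left, inner_smul_right, hsa x y]
  have hDnn : ∀ x, 0 ≤ ⟪((1 - a) • C) x, x⟫_ℝ := by
    intro x
    have := mul_nonneg hs.le (hCnn x)
    simpa [inner_smul_left] using this
  have hν₀p := hν₀.1
  have hρp := hρ.1
  have hmap : ν₀.map (fun u => Real.sqrt (1 - a) • u) = ρ := by
    refine gauss_unique ⟨Measure.isProbabilityMeasure_map (by fun_prop), ?_⟩ hρ hDnn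
    intro v
    rw [Measure.map_map (by fun_prop) (by fun_prop)]
    have : ((fun x => ⟪v, x⟫_ℝ) ∘ fun u : H => Real.sqrt (1 - a) • u)
        = fun x => ⟪Real.sqrt (1 - a) • v, x⟫_ℝ := by
      ext x
      simp [inner_smul_left, inner_smul_right]
    rw [this, hν₀.2]
    congr 2
    simp only [map_smul, inner_smul_left, inner_smul_right, smul_apply]
    simp only [conj_trivial]
    rw [← mul_assoc, Real.mul_self_sqrt hs.le]
  rw [hmap]
  have hCap : ∀ x, sqrtC (sqrtC x) = C x := fun x => by rw [← hsqrt]; rfl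
  have hker : ∀ x, sqrtC x = 0 → x = 0 := by
    intro x hx
    by_contra hne
    have h1 := hpos x hne
    rw [← hCap, hx] at h1
    simp at h1
  have hinj : Function.Injective sqrtC := (injective_iff_map_eq_zero sqrtC).2 hker
  have hRm : MeasurableSet (Set.range sqrtC) :=
    measurableSet_range_of_continuous_injective sqrtC.continuous hinj
  have hae : ∀ᵐ u ∂μ, u ∈ Set.range sqrtC := (prob_compl_eq_zero_iff hRm).2 hμ
  have hdense : Dense (Set.range sqrtC) := by
    have hb : (LinearMap.range (sqrtC : H →ₗ[ℝ] H))ᗮ = ⊥ := by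
      rw [Submodule.eq_bot_iff]
      intro x hx
      apply hker
      rw [Submodule.mem_orthogonal] at hx
      have h1 := hx (sqrtC (sqrtC x)) ⟨sqrtC x, rfl⟩
      rw [hsqrt_sa] at h1
      exact inner_self_eq_zero.1 h1
    have h2 := (Submodule.topologicalClosure_eq_top_iff
      (K := LinearMap.range (sqrtC : H →ₗ[ℝ] H))).2 hb
    have h3 := (Submodule.dense_iff_topologicalClosure_eq_top).2 h2
    exact h3
  have hCM : ∀ x : H, ∀ A : Set H, ρ A = 0 → ρ ((fun y => y + sqrtC x) ⁻¹' A) = 0 := by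
    intro x A hA
    obtain ⟨w, hw, hwx⟩ := mem_closure_iff_seq_limit.1 (hdense x)
    choose z hz using hw
    have hz' : ∀ n, sqrtC (z n) = w n := hz
    have hn : Filter.Tendsto (fun n => ⟪w n, w n⟫_ℝ) Filter.atTop (nhds ⟪x, x⟫_ℝ) :=
      hwx.inner hwx
    refine gauss_shift_ac hρ hDsa hDnn (fun n => (1 - a)⁻¹ • z n) (sqrtC x)
      ((1 - a)⁻¹ * (⟪x, x⟫_ℝ + 1)) ?_ ?_ A hA
    · have := (sqrtC.continuous.tendsto x).comp hwx
      refine this.congr fun n => ?_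
      simp only [Function.comp_apply, smul_apply, map_smul]
      rw [smul_smul, inv_mul_cancel₀ hs.ne', one_smul, ← hCap, hz']
    · filter_upwards [hn.eventually (gt_mem_nhds (lt_add_one _))] with n hn
      simp only [smul_apply, map_smul, inner_smul_left, inner_smul_right,
        conj_trivial]
      rw [← hCap, hsqrt_sa, hz', inv_mul_cancel_left₀ hs.ne']
      exact mul_le_mul_of_nonneg_left hn.le (by positivity)
  have hconv : ∀ A : Set H, MeasurableSet A →
      ((μ.map fun u => Real.sqrt a • u) ∗ ρ) A
        = ∫⁻ u, ρ ((fun y => y + Real.sqrt a • u) ⁻¹' A) ∂μ := by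
    intro A hA
    have hf : Measurable (fun p : H => ∫⁻ y, A.indicator (1 : H → ℝ≥0∞) (p + y) ∂ρ) := by
      apply Measurable.lintegral_prod_right' (f := fun q : H × H => A.indicator 1 (q.1 + q.2))
      exact (measurable_one.indicator hA).comp (by fun_prop)
    rw [← lintegral_indicator_one hA, Measure.lintegral_conv (measurable_one.indicator hA),
      lintegral_map hf (by fun_prop)]
    congr 1
    ext u
    rw [← lintegral_indicator_one (hA.preimage (by fun_prop))]
    congr 1
    ext y
    rw [add_comm]
    rfl
  constructor
  · refine Measure.AbsolutelyContinuous.mk fun A hA h0 => ?_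
    rw [hconv A hA, lintegral_eq_zero_of_ae_eq_zero]
    filter_upwards [hae] with u hu
    obtain ⟨x, rfl⟩ := hu
    have := hCM (Real.sqrt a • x) A h0
    simpa using this
  · refine Measure.AbsolutelyContinuous.mk fun A hA h0 => ?_
    rw [hconv A hA] at h0
    have hm : Measurable fun u : H => ρ ((fun y => y + Real.sqrt a • u) ⁻¹' A) := by
      have hS : MeasurableSet {q : H × H | q.2 + Real.sqrt a • q.1 ∈ A} :=
        hA.preimage (f := fun q : H × H => q.2 + Real.sqrt a • q.1) (by fun_prop)
      exact measurable_measure_prodMk_left hS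
    rw [lintegral_eq_zero_iff hm] at h0
    obtain ⟨u, hu, hu0⟩ := (hae.and h0).exists
    obtain ⟨x, rfl⟩ := hu
    have := hCM (-(Real.sqrt a • x)) _ hu0
    rw [← Set.preimage_comp] at this
    convert this using 2
    ext y
    simp [Function.comp_def]
end
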